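/- arXiv:2309.17042 — 3 statements merged into one kernel-verified Lean document; each statement's English description precedes it below -/
import Mathlib

section
/- Let V be a finite set of variables and let T be a finite set of m pairwise distinct terms over V, where a term is a pair t = (P_t, N_t) of disjoint subsets of V. Then the number of assignments σ : V → Bool that satisfy at least one term of T (i.e., for some t ∈ T, σ(v) = true for all v ∈ P_t and σ(v) = false for all v ∈ N_t) is at least m^(log 2 / log 3), i.e., at least m^(log₃ 2). -/
/-!
A term is a subcube of `V → Bool`, encoded as a word `V → Option Bool` in which `none` marks a free
coordinate, so it suffices to bound the number of subcubes contained in a set `S` of words.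
More generally, over an alphabet `α` with `q ≥ 2` letters there are at most `|S| ^ p` of them, where
`p = log_q (q + 1)`; equality holds for `S = univ`, which has `q ^ n` words and `(q + 1) ^ n`
subcubes.

Induct on the number of coordinates, slicing `S` by the first letter into `S_a`, `a : α`. A subcube
in `S` either fixes the first letter to some `a` and is a subcube of `S_a`, or leaves it free and is
a subcube of every `S_a`, in particular of the smallest one. This leaves the inequality
`∑ x_a ^ p + (min x_a) ^ p ≤ (∑ x_a) ^ p`. By convexity `(∑ x_a) ^ p - ∑ x_a ^ p` is monotone in
each `x_a`, so the worst case is that all `x_a` agree, where it is the definition of `p`.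
-/

section Convexity

variable {𝕜 ι : Type*} [Field 𝕜] [LinearOrder 𝕜] [IsStrictOrderedRing 𝕜] {f : 𝕜 → 𝕜}

theorem map_add_sub_map_le_of_convexOn {s : Set 𝕜} (hf : ConvexOn 𝕜 s f) {x y d : 𝕜}
    (hx : x ∈ s) (hyd : y + d ∈ s) (hxy : x ≤ y) (hd : 0 ≤ d) :
    f (x + d) - f x ≤ f (y + d) - f y := by
  rcases hd.eq_or_lt with rfl | hd_pos
  · simp
  have hlen : 0 < y - x + d := by linarith
  set w := d / (y - x + d)
  have hw_nonneg : 0 ≤ w := by positivity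
  have hw_compl_nonneg : 0 ≤ 1 - w := sub_nonneg.2 ((div_le_one hlen).2 (by linarith))
  have hw_mul : w * (y - x + d) = d := div_mul_cancel₀ d hlen.ne'
  have hleft : (1 - w) • x + w • (y + d) = x + d := by
    simp only [smul_eq_mul]; linear_combination hw_mul
  have hright : w • x + (1 - w) • (y + d) = y := by
    simp only [smul_eq_mul]; linear_combination -hw_mul
  have jensen_left := hf.2 hx hyd hw_compl_nonneg hw_nonneg (by ring)
  have jensen_right := hf.2 hx hyd hw_nonneg hw_compl_nonneg (by ring)
  rw [hleft, smul_eq_mul, smul_eq_mul] at jensen_left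
  rw [hright, smul_eq_mul, smul_eq_mul] at jensen_right
  linarith

theorem sum_map_sub_card_mul_map_le_of_convexOn (hf : ConvexOn 𝕜 (Set.Ici 0) f)
    {m : 𝕜} (hm : 0 ≤ m) {x : ι → 𝕜} (s : Finset ι) (hx : ∀ i ∈ s, m ≤ x i) :
    ∑ i ∈ s, f (x i) - s.card * f m ≤ f (∑ i ∈ s, x i) - f (s.card * m) := by
  classical
  induction s using Finset.induction_on with
  | empty => simp
  | insert a s ha ih =>
    rw [Finset.forall_mem_insert] at hx
    obtain ⟨hxa, hxs⟩ := hx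
    have hcard_le : s.card * m ≤ ∑ i ∈ s, x i := by
      simpa using s.card_nsmul_le_sum x m hxs
    have hcard_nonneg : 0 ≤ s.card * m := by positivity
    have hsum_nonneg : 0 ≤ ∑ i ∈ s, x i := hcard_nonneg.trans hcard_le
    have increase_xa : f (m + ∑ i ∈ s, x i) - f m ≤ f (x a + ∑ i ∈ s, x i) - f (x a) :=
      map_add_sub_map_le_of_convexOn hf hm
        (Set.mem_Ici.2 (add_nonneg (hm.trans hxa) hsum_nonneg)) hxa hsum_nonneg
    have increase_sum : f (s.card * m + m) - f (s.card * m) ≤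
        f (∑ i ∈ s, x i + m) - f (∑ i ∈ s, x i) :=
      map_add_sub_map_le_of_convexOn hf hcard_nonneg
        (Set.mem_Ici.2 (add_nonneg hsum_nonneg hm)) hcard_le hm
    rw [Finset.sum_insert ha, Finset.sum_insert ha, Finset.card_insert_of_notMem ha,
      Nat.cast_add_one, add_one_mul, add_one_mul]
    rw [add_comm m] at increase_xa
    linarith [ih hxs]

theorem sum_rpow_add_mul_rpow_le_rpow_sum [Fintype ι] {p m : ℝ} (hp : 1 ≤ p) (hm : 0 ≤ m)
    {x : ι → ℝ} (hx : ∀ i, m ≤ x i) :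
    ∑ i, x i ^ p + ((Fintype.card ι : ℝ) ^ p - Fintype.card ι) * m ^ p ≤ (∑ i, x i) ^ p := by
  have h := sum_map_sub_card_mul_map_le_of_convexOn (convexOn_rpow hp) hm Finset.univ
    fun i _ => hx i
  rw [Finset.card_univ, Real.mul_rpow (Nat.cast_nonneg _) hm] at h
  linarith

end Convexity

section Subcube

variable {V W α : Type*}

/-- The words `V → α` that agree with the partial word `t` wherever it is defined. The coordinates
which `t` sends to `none` are the free ones. -/
def subcube (t : V → Option α) : Set (V → α) :=
  {σ | ∀ v a, t v = some a → σ v = a}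

/-- The subcubes contained in `S`, each represented by its partial word. -/
def subcubesIn (S : Set (V → α)) : Set (V → Option α) :=
  {t | subcube t ⊆ S}

theorem subcube_nonempty [Nonempty α] (t : V → Option α) : (subcube t).Nonempty :=
  ⟨fun v => (t v).getD (Classical.arbitrary α), fun v a hva => by simp [hva]⟩

theorem subcubesIn_empty [Nonempty α] : subcubesIn (∅ : Set (V → α)) = ∅ :=
  Set.eq_empty_of_forall_notMem fun t ht => ((subcube_nonempty t).mono ht).ne_empty rfl

theorem comp_equiv_mem_subcube_comp_equiv (e : V ≃ W) {t : W → Option α} {σ : W → α} :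
    σ ∘ e ∈ subcube (t ∘ e) ↔ σ ∈ subcube t :=
  e.forall_congr_right (q := fun w => ∀ a, t w = some a → σ w = a)

theorem preimage_comp_equiv_subcubesIn (e : V ≃ W) (S : Set (V → α)) :
    (· ∘ e) ⁻¹' subcubesIn S = subcubesIn ((· ∘ e) ⁻¹' S) := by
  ext t
  calc t ∘ e ∈ subcubesIn S
      ↔ ∀ σ : W → α, σ ∘ e ∈ subcube (t ∘ e) → σ ∘ e ∈ S :=
        ((e.arrowCongr (Equiv.refl α)).symm.forall_congr_right).symm
    _ ↔ t ∈ subcubesIn ((· ∘ e) ⁻¹' S) :=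
        forall_congr' fun _ => imp_congr_left (comp_equiv_mem_subcube_comp_equiv e)

theorem ncard_preimage_comp_equiv (e : V ≃ W) (A : Set (V → α)) :
    ((· ∘ e) ⁻¹' A : Set (W → α)).ncard = A.ncard :=
  Set.ncard_preimage_of_injective_subset_range e.surjective.injective_comp_right
    fun σ _ => ⟨σ ∘ e.symm, by ext; simp⟩

end Subcube

section Slice

variable {α : Type*} {n : ℕ}

/-- The tails of the words of `A` whose first letter is `a`. -/
def slice (A : Set (Fin (n + 1) → α)) (a : α) : Set (Fin n → α) :=
  {w | Fin.cons a w ∈ A}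

theorem ncard_eq_sum_ncard_slice [Fintype α] (A : Set (Fin (n + 1) → α)) :
    A.ncard = ∑ a, (slice A a).ncard := by
  let consEquiv : α × (Fin n → α) ≃ (Fin (n + 1) → α) := Fin.consEquiv fun _ => α
  calc A.ncard
      = Nat.card {x : α × (Fin n → α) // x.2 ∈ slice A x.1} :=
        (Nat.card_congr (consEquiv.subtypeEquiv fun _ => Iff.rfl)).symm
    _ = Nat.card (Σ a, slice A a) :=
        Nat.card_congr (Equiv.subtypeProdEquivSigmaSubtype fun a w => w ∈ slice A a)
    _ = ∑ a, (slice A a).ncard := Nat.card_sigma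

theorem cons_mem_subcube_cons {o : Option α} {t : Fin n → Option α} {a : α} {σ : Fin n → α} :
    (Fin.cons a σ : Fin (n + 1) → α) ∈ subcube (Fin.cons o t) ↔
      (∀ b, o = some b → a = b) ∧ σ ∈ subcube t :=
  Fin.forall_fin_succ

theorem slice_subcubesIn_subset (S : Set (Fin (n + 1) → α)) {o : Option α} {a : α}
    (hoa : ∀ b, o = some b → a = b) : slice (subcubesIn S) o ⊆ subcubesIn (slice S a) :=
  fun _ ht _ hσ => ht (cons_mem_subcube_cons.2 ⟨hoa, hσ⟩)

end Slice

section Count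

variable {α : Type*} [Fintype α] [Nontrivial α]

variable (α) in
/-- The number `p` with `q ^ p = q + 1`, where `q ≥ 2` is the size of the alphabet `α`. -/
noncomputable def subcubeExponent : ℝ :=
  Real.logb (Fintype.card α) (Fintype.card α + 1)

variable (α) in
theorem one_le_subcubeExponent : 1 ≤ subcubeExponent α := by
  have hcard : (1 : ℝ) < Fintype.card α := Nat.one_lt_cast.2 Fintype.one_lt_card
  rw [subcubeExponent, Real.le_logb_iff_rpow_le hcard (by positivity), Real.rpow_one]
  exact (lt_add_one _).le

variable (α) in
theorem card_rpow_subcubeExponent :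
    (Fintype.card α : ℝ) ^ subcubeExponent α = Fintype.card α + 1 :=
  have hcard : (1 : ℝ) < Fintype.card α := Nat.one_lt_cast.2 Fintype.one_lt_card
  Real.rpow_logb (zero_lt_one.trans hcard) hcard.ne' (by positivity)

theorem sum_rpow_subcubeExponent_add_rpow_le {x : α → ℝ} {a : α} (hxa : 0 ≤ x a)
    (hmin : ∀ b, x a ≤ x b) :
    ∑ b, x b ^ subcubeExponent α + x a ^ subcubeExponent α ≤ (∑ b, x b) ^ subcubeExponent α := by
  have h := sum_rpow_add_mul_rpow_le_rpow_sum (one_le_subcubeExponent α) hxa hmin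
  rwa [card_rpow_subcubeExponent, add_sub_cancel_left, one_mul] at h

theorem ncard_subcubesIn_fin_le {n : ℕ} (S : Set (Fin n → α)) :
    ((subcubesIn S).ncard : ℝ) ≤ (S.ncard : ℝ) ^ subcubeExponent α := by
  induction n with
  | zero =>
    rcases S.eq_empty_or_nonempty with rfl | hS
    · rw [subcubesIn_empty, Set.ncard_empty, Nat.cast_zero]
      positivity
    · calc ((subcubesIn S).ncard : ℝ)
          ≤ 1 := mod_cast Set.ncard_le_one_of_subsingleton _
        _ ≤ (S.ncard : ℝ) ^ subcubeExponent α :=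
            Real.one_le_rpow (mod_cast hS.ncard_pos)
              (zero_le_one.trans (one_le_subcubeExponent α))
  | succ n ih =>
    have slice_le {o : Option α} {a : α} (hoa : ∀ b, o = some b → a = b) :
        ((slice (subcubesIn S) o).ncard : ℝ) ≤ ((slice S a).ncard : ℝ) ^ subcubeExponent α :=
      (Nat.cast_le.2 (Set.ncard_le_ncard (slice_subcubesIn_subset S hoa))).trans (ih _)
    obtain ⟨a, hmin⟩ := Finite.exists_min fun a => (slice S a).ncard
    calc ((subcubesIn S).ncard : ℝ)
        = ∑ b, ((slice (subcubesIn S) (some b)).ncard : ℝ) +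
            (slice (subcubesIn S) none).ncard := by
          rw [ncard_eq_sum_ncard_slice, Fintype.sum_option, add_comm, Nat.cast_add, Nat.cast_sum]
      _ ≤ ∑ b, ((slice S b).ncard : ℝ) ^ subcubeExponent α +
            ((slice S a).ncard : ℝ) ^ subcubeExponent α := by
          gcongr with b
          · exact slice_le fun _ => Option.some.inj
          · exact slice_le (by simp)
      _ ≤ (∑ b, ((slice S b).ncard : ℝ)) ^ subcubeExponent α :=
          sum_rpow_subcubeExponent_add_rpow_le (Nat.cast_nonneg _) fun b => Nat.cast_le.2 (hmin b)
      _ = (S.ncard : ℝ) ^ subcubeExponent α := by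
          rw [ncard_eq_sum_ncard_slice S, Nat.cast_sum]

theorem ncard_subcubesIn_le {V : Type*} [Finite V] (S : Set (V → α)) :
    ((subcubesIn S).ncard : ℝ) ≤ (S.ncard : ℝ) ^ subcubeExponent α := by
  obtain ⟨n, ⟨e⟩⟩ := Finite.exists_equiv_fin V
  rw [← ncard_preimage_comp_equiv e S, ← ncard_preimage_comp_equiv e (subcubesIn S),
    preimage_comp_equiv_subcubesIn]
  exact ncard_subcubesIn_fin_le _

end Count

section Term

variable {V : Type*} [DecidableEq V] {t : Finset V × Finset V}

/-- The term with positive variables `t.1` and negative variables `t.2`, as a partial word. A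
variable occurring with both signs counts as positive. -/
def partialWord (t : Finset V × Finset V) (v : V) : Option Bool :=
  if v ∈ t.1 then some true else if v ∈ t.2 then some false else none

theorem partialWord_eq_some_true_iff {v : V} : partialWord t v = some true ↔ v ∈ t.1 := by
  unfold partialWord
  split_ifs <;> simp_all

theorem partialWord_eq_some_false_iff (ht : Disjoint t.1 t.2) {v : V} :
    partialWord t v = some false ↔ v ∈ t.2 := by
  have hv : v ∈ t.1 → v ∉ t.2 := fun h => Finset.disjoint_left.1 ht h
  unfold partialWord
  split_ifs <;> simp_all

theorem injOn_partialWord :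
    Set.InjOn (partialWord (V := V)) {t | Disjoint t.1 t.2} := by
  intro s hs t ht hst
  ext v
  · rw [← partialWord_eq_some_true_iff, hst, partialWord_eq_some_true_iff]
  · rw [← partialWord_eq_some_false_iff hs, hst, partialWord_eq_some_false_iff ht]

theorem mem_subcube_partialWord_iff (ht : Disjoint t.1 t.2) {σ : V → Bool} :
    σ ∈ subcube (partialWord t) ↔ (∀ v ∈ t.1, σ v = true) ∧ (∀ v ∈ t.2, σ v = false) := by
  simp only [subcube, Set.mem_ofPred_eq, Bool.forall_bool, partialWord_eq_some_true_iff,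
    partialWord_eq_some_false_iff ht, forall_and, and_comm]

end Term

/-- A DNF with `m` distinct terms over a finite variable set `V` has at
least `m ^ (log 2 / log 3)` models. A term is a pair of disjoint finsets of
positive/negative variables. -/
theorem dnf_model_count_lower_bound {V : Type*} [Fintype V]
    (T : Finset (Finset V × Finset V))
    (hdisj : ∀ t ∈ T, Disjoint t.1 t.2) :
    ((T.card : ℝ) ^ (Real.log 2 / Real.log 3)) ≤
      (Nat.card {σ : V → Bool //
        ∃ t ∈ T, (∀ v ∈ t.1, σ v = true) ∧ (∀ v ∈ t.2, σ v = false)} : ℝ) := by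
  classical
  let models : Set (V → Bool) :=
    {σ | ∃ t ∈ T, (∀ v ∈ t.1, σ v = true) ∧ (∀ v ∈ t.2, σ v = false)}
  change _ ≤ (models.ncard : ℝ)
  have hmaps : ∀ t ∈ T, partialWord t ∈ subcubesIn models := fun t ht _ hσ =>
    ⟨t, ht, (mem_subcube_partialWord_iff (hdisj t ht)).1 hσ⟩
  have hcard : T.card ≤ (subcubesIn models).ncard := by
    rw [← Set.ncard_coe_finset]
    exact Set.ncard_le_ncard_of_injOn partialWord hmaps (injOn_partialWord.mono hdisj)
  have hexponent : Real.log 2 / Real.log 3 = (subcubeExponent Bool)⁻¹ := by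
    rw [subcubeExponent, Real.inv_logb, Real.log_div_log, Fintype.card_bool]
    norm_num
  rw [hexponent, Real.rpow_inv_le_iff_of_pos (Nat.cast_nonneg _) (Nat.cast_nonneg _)
    (zero_lt_one.trans_le (one_le_subcubeExponent Bool))]
  exact (Nat.cast_le.2 hcard).trans (ncard_subcubesIn_le models)
end

section
/- Define the reflected binary code lists RBC : ℕ → List (List Bool) recursively by RBC 0 = [[]] and RBC (n+1) = (map (false :: ·) (RBC n)) ++ (map (true :: ·) (reverse (RBC n))). Then for every n: (i) RBC n has length 2^n, every entry of RBC n is a binary word of length n, and RBC n contains every binary word of length n exactly once; and (ii) any two consecutive entries of RBC n differ in exactly one position. -/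
/-- The reflected binary code on `n` bits. -/
def RBC : ℕ → List (List Bool)
  | 0 => [[]]
  | n + 1 => ((RBC n).map (false :: ·)) ++ (((RBC n).reverse).map (true :: ·))

section WordDist

variable {α : Type*} [DecidableEq α] (d : α) (n : ℕ)

/-- The Hamming distance of two words restricted to their first `n` positions. Words are lists
of any length, read as `d` beyond their end. -/
def wordDist (u v : List α) : ℕ :=
  ((Finset.range n).filter fun j => u.getD j d ≠ v.getD j d).card

theorem wordDist_self (u : List α) : wordDist d n u u = 0 := by
  simp [wordDist]

theorem wordDist_comm (u v : List α) : wordDist d n u v = wordDist d n v u := by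
  simp only [wordDist, ne_comm]

theorem wordDist_cons_cons (a b : α) (u v : List α) :
    wordDist d (n + 1) (a :: u) (b :: v) = wordDist d n u v + if a ≠ b then 1 else 0 := by
  simp only [wordDist, Finset.card_filter, Finset.sum_range_succ', List.getD_cons_succ,
    List.getD_cons_zero]

theorem wordDist_cons_cons_same (a : α) (u v : List α) :
    wordDist d (n + 1) (a :: u) (a :: v) = wordDist d n u v := by
  simp [wordDist_cons_cons]

theorem wordDist_cons_cons_of_ne {a b : α} (hab : a ≠ b) (u : List α) :
    wordDist d (n + 1) (a :: u) (b :: u) = 1 := by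
  simp [wordDist_cons_cons, wordDist_self, hab]

end WordDist

theorem isChain_map_append_map_reverse {α β : Type*} {R : α → α → Prop} {S : β → β → Prop}
    {f g : α → β} {l : List α} (hl : l.IsChain R) (hf : ∀ a b, R a b → S (f a) (f b))
    (hg : ∀ a b, R a b → S (g b) (g a)) (hfg : ∀ a ∈ l.getLast?, S (f a) (g a)) :
    (l.map f ++ l.reverse.map g).IsChain S := by
  refine List.IsChain.append (List.isChain_map_of_isChain f hf hl) ?_ ?_
  · rw [List.map_reverse, List.isChain_reverse]
    exact List.isChain_map_of_isChain g hg hl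
  · -- Reflection makes both entries at the junction come from the last entry of `l`.
    intro x hx y hy
    rw [List.getLast?_map, Option.mem_map] at hx
    rw [List.head?_map, List.head?_reverse, Option.mem_map] at hy
    obtain ⟨a, ha, rfl⟩ := hx
    obtain ⟨b, hb, rfl⟩ := hy
    obtain rfl := Option.mem_unique ha hb
    exact hfg a ha

theorem length_RBC (n : ℕ) : (RBC n).length = 2 ^ n := by
  induction n with
  | zero => rfl
  | succ n ih =>
    rw [RBC, List.length_append, List.length_map, List.length_map, List.length_reverse, ih,
      pow_succ, mul_two]

theorem mem_RBC {n : ℕ} {w : List Bool} : w ∈ RBC n ↔ w.length = n := by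
  induction n generalizing w with
  | zero => simp [RBC]
  | succ n ih =>
    rcases w with _ | ⟨_ | _, w⟩ <;> simp [RBC, ih]

theorem nodup_RBC (n : ℕ) : (RBC n).Nodup := by
  induction n with
  | zero => exact List.nodup_singleton []
  | succ n ih =>
    have nodup_false : ((RBC n).map (false :: ·)).Nodup := ih.map List.cons_injective
    have nodup_true : ((RBC n).reverse.map (true :: ·)).Nodup :=
      (List.nodup_reverse.mpr ih).map List.cons_injective
    refine nodup_false.append nodup_true ?_
    simp [List.disjoint_left]

theorem isChain_RBC (n : ℕ) : (RBC n).IsChain fun u v => wordDist false n u v = 1 := by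
  induction n with
  | zero => exact List.isChain_singleton []
  | succ n ih =>
    refine isChain_map_append_map_reverse ih (fun u v huv => ?_) (fun u v huv => ?_)
      (fun u _ => wordDist_cons_cons_of_ne false n Bool.false_ne_true u)
    · rwa [wordDist_cons_cons_same]
    · rwa [wordDist_cons_cons_same, wordDist_comm]

/-- `RBC n` lists all `2^n` binary words of length `n`, each
exactly once, and consecutive words differ in exactly one position. -/
theorem RBC_gray_code (n : ℕ) :
    (RBC n).length = 2 ^ n ∧
    (∀ w ∈ RBC n, w.length = n) ∧
    (∀ w : List Bool, w.length = n → (RBC n).count w = 1) ∧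
    (∀ i : ℕ, i + 1 < (RBC n).length →
      ((Finset.range n).filter fun j =>
          ((RBC n).getD i []).getD j false ≠ ((RBC n).getD (i + 1) []).getD j false).card
        = 1) := by
  refine ⟨length_RBC n, fun w => mem_RBC.mp,
    fun w hw => List.count_eq_one_of_mem (nodup_RBC n) (mem_RBC.mpr hw), fun i hi => ?_⟩
  rw [List.getD_eq_getElem _ _ (Nat.lt_of_succ_lt hi), List.getD_eq_getElem _ _ hi]
  exact List.isChain_iff_getElem.mp (isChain_RBC n) i hi
end

section
/- Let maj : Bool → Bool → Bool → Bool be the ternary Boolean majority operation (maj(a,b,c) is true iff at least two of a, b, c are true), extended componentwise to vectors in Bool^n, i.e., to functions Fin n → Bool. For a nonempty set S of vectors in Bool^n, let Cl_maj(S) be the smallest subset of Bool^n that contains S and is closed under componentwise maj. Then for every v ∈ Bool^n, v ∈ Cl_maj(S) if and only if for every pair of coordinates i, j ∈ Fin n there exists s ∈ S with s(i) = v(i) and s(j) = v(j). In other words, membership in the closure under componentwise majority is characterized by the projections of S onto every 2 components. -/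
/-- Componentwise closure of a set of Boolean vectors under the ternary
majority operation: the smallest superset of `S` closed under componentwise
majority. -/
inductive ClMaj {n : ℕ} (S : Set (Fin n → Bool)) : (Fin n → Bool) → Prop
  | base : ∀ v ∈ S, ClMaj S v
  | maj : ∀ u v w : Fin n → Bool, ClMaj S u → ClMaj S v → ClMaj S w →
      ClMaj S (fun i => (u i && v i) || (v i && w i) || (u i && w i))

/-!
Majority preserves every binary relation on `Bool`: of three pairs, at least two carry the majority
value of the first entries and at least two that of the second entries, so some pair carries both.
Conversely, approximations of `v` are glued by induction on the set `T` of coordinates on which they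
agree with `v`: given distinct `a`, `b`, `c` in `T` and vectors agreeing with `v` on `T \ {a}`,
`T \ {b}` and `T \ {c}`, at each coordinate of `T` at least two of the three vectors have the value
of `v`, hence so does their majority.
-/

/-- A ternary operation is a majority operation if it returns any value taken by at least two of
its arguments; on types with more than two elements the value at three distinct arguments is
unconstrained. -/
structure IsMajority {α : Type*} (m : α → α → α → α) : Prop where
  left_middle : ∀ a b, m a a b = a
  left_right : ∀ a b, m a b a = a
  middle_right : ∀ a b, m b a a = a

section MajorityOperation

open Set

variable {ι α : Type*} {m : α → α → α → α} {C : Set (ι → α)} {v : ι → α}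

theorem IsMajority.eqOn_of_eqOn_erase [DecidableEq ι] (hm : IsMajority m) {T : Finset ι}
    {a b c : ι} (hab : a ≠ b) (hac : a ≠ c) (hbc : b ≠ c) {x y z : ι → α}
    (hx : EqOn x v (T.erase a)) (hy : EqOn y v (T.erase b)) (hz : EqOn z v (T.erase c)) :
    EqOn (fun i => m (x i) (y i) (z i)) v T := by
  intro i hi
  have hxi (hia : i ≠ a) : x i = v i := hx (Finset.mem_erase.2 ⟨hia, hi⟩)
  have hyi (hib : i ≠ b) : y i = v i := hy (Finset.mem_erase.2 ⟨hib, hi⟩)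
  have hzi (hic : i ≠ c) : z i = v i := hz (Finset.mem_erase.2 ⟨hic, hi⟩)
  rcases eq_or_ne i a with rfl | hia
  · simp only [hyi hab, hzi hac, hm.middle_right]
  rcases eq_or_ne i b with rfl | hib
  · simp only [hxi hia, hzi hbc, hm.left_right]
  · simp only [hxi hia, hyi hib, hm.left_middle]

theorem exists_mem_eqOn_of_card_le_two (hne : C.Nonempty)
    (hpair : ∀ i j, ∃ s ∈ C, s i = v i ∧ s j = v j) {T : Finset ι} (hT : T.card ≤ 2) :
    ∃ s ∈ C, EqOn s v T := by
  classical
  rcases T.eq_empty_or_nonempty with rfl | ⟨i, hi⟩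
  · obtain ⟨s, hs⟩ := hne
    exact ⟨s, hs, by simp⟩
  · have : Nonempty ι := ⟨i⟩
    have herase : (T.erase i).card ≤ 1 := by rw [Finset.card_erase_of_mem hi]; lia
    obtain ⟨j, hj⟩ := Finset.card_le_one_iff_subset_singleton.1 herase
    obtain ⟨s, hs, hsi, hsj⟩ := hpair i j
    have hTij : T ⊆ {i, j} := Finset.subset_insert_iff.2 hj
    have hsv : EqOn s v ({i, j} : Finset ι) := by simp [EqOn, hsi, hsj]
    exact ⟨s, hs, hsv.mono (Finset.coe_subset.2 hTij)⟩

theorem IsMajority.exists_mem_eqOn_finset (hm : IsMajority m)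
    (hC : ∀ x ∈ C, ∀ y ∈ C, ∀ z ∈ C, (fun i => m (x i) (y i) (z i)) ∈ C) (hne : C.Nonempty)
    (hpair : ∀ i j, ∃ s ∈ C, s i = v i ∧ s j = v j) (T : Finset ι) :
    ∃ x ∈ C, EqOn x v T := by
  classical
  induction T using Finset.strongInduction with
  | H T ih =>
    rcases le_or_gt T.card 2 with hT | hT
    · exact exists_mem_eqOn_of_card_le_two hne hpair hT
    · obtain ⟨a, b, c, ha, hb, hc, hab, hac, hbc⟩ := Finset.two_lt_card_iff.1 hT
      obtain ⟨x, hxC, hx⟩ := ih _ (Finset.erase_ssubset ha)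
      obtain ⟨y, hyC, hy⟩ := ih _ (Finset.erase_ssubset hb)
      obtain ⟨z, hzC, hz⟩ := ih _ (Finset.erase_ssubset hc)
      exact ⟨_, hC x hxC y hyC z hzC, hm.eqOn_of_eqOn_erase hab hac hbc hx hy hz⟩

theorem IsMajority.mem_of_forall_pair [Finite ι] (hm : IsMajority m)
    (hC : ∀ x ∈ C, ∀ y ∈ C, ∀ z ∈ C, (fun i => m (x i) (y i) (z i)) ∈ C) (hne : C.Nonempty)
    (hpair : ∀ i j, ∃ s ∈ C, s i = v i ∧ s j = v j) : v ∈ C := by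
  have := Fintype.ofFinite ι
  obtain ⟨x, hxC, hx⟩ := hm.exists_mem_eqOn_finset hC hne hpair Finset.univ
  rw [Finset.coe_univ, eqOn_univ] at hx
  exact hx ▸ hxC

end MajorityOperation

/-- The Boolean majority of three values, written with the formula used in `ClMaj.maj` so that the
two agree definitionally. -/
def boolMaj (a b c : Bool) : Bool :=
  (a && b) || (b && c) || (a && c)

theorem isMajority_boolMaj : IsMajority boolMaj where
  left_middle := by decide
  left_right := by decide
  middle_right := by decide

theorem boolMaj_pair_eq (a b c a' b' c' : Bool) :
    (boolMaj a b c = a ∧ boolMaj a' b' c' = a') ∨ (boolMaj a b c = b ∧ boolMaj a' b' c' = b') ∨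
      (boolMaj a b c = c ∧ boolMaj a' b' c' = c') := by
  decide +revert

theorem boolMaj_preserves (r : Bool → Bool → Prop) {a b c a' b' c' : Bool} (ha : r a a')
    (hb : r b b') (hc : r c c') : r (boolMaj a b c) (boolMaj a' b' c') := by
  rcases boolMaj_pair_eq a b c a' b' c' with ⟨h, h'⟩ | ⟨h, h'⟩ | ⟨h, h'⟩ <;> rwa [h, h']

theorem ClMaj.exists_mem_pair_eq {n : ℕ} {S : Set (Fin n → Bool)} {v : Fin n → Bool}
    (hv : ClMaj S v) (i j : Fin n) : ∃ s ∈ S, s i = v i ∧ s j = v j := by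
  induction hv with
  | base v hv => exact ⟨v, hv, rfl, rfl⟩
  | maj u v w _ _ _ hu hv hw =>
    exact boolMaj_preserves (fun p q => ∃ s ∈ S, s i = p ∧ s j = q) hu hv hw

/-- Baker–Pixley for the majority operation: for a nonempty set
`S` of vectors in `Bool^n`, a vector `v` belongs to the closure of `S` under
componentwise majority iff for all coordinates `i, j` some `s ∈ S` agrees with
`v` on both `i` and `j`. -/
theorem mem_clMaj_iff_pair_projections {n : ℕ} (S : Set (Fin n → Bool))
    (hS : S.Nonempty) (v : Fin n → Bool) :
    ClMaj S v ↔ ∀ i j : Fin n, ∃ s ∈ S, s i = v i ∧ s j = v j := by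
  refine ⟨ClMaj.exists_mem_pair_eq, fun hpair => ?_⟩
  have hSC : S ⊆ {u | ClMaj S u} := ClMaj.base
  have hclosed : ∀ x ∈ {u | ClMaj S u}, ∀ y ∈ {u | ClMaj S u}, ∀ z ∈ {u | ClMaj S u},
      (fun i => boolMaj (x i) (y i) (z i)) ∈ {u | ClMaj S u} :=
    fun x hx y hy z hz => ClMaj.maj x y z hx hy hz
  refine isMajority_boolMaj.mem_of_forall_pair hclosed (hS.mono hSC) fun i j => ?_
  obtain ⟨s, hs, hsij⟩ := hpair i j
  exact ⟨s, hSC hs, hsij⟩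
end
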